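/- Let n ≥ 5 and let G be a connected simple undirected graph with n vertices and m edges, where n ≤ m < 2(n-2). Then the number of 4-cycles in G is at most C(m-n+2, 2) = (m-n+2)(m-n+1)/2. -/

import Mathlib

open Finset

/-- The number of quadrangles (4-cycles) of a simple graph: each 4-cycle corresponds
to exactly 8 cyclically adjacent quadruples of distinct vertices. -/
noncomputable def quadCount {n : ℕ} (G : SimpleGraph (Fin n)) : ℕ :=
  letI := Classical.decRel G.Adj
  (Finset.univ.filter (fun p : Fin n × Fin n × Fin n × Fin n =>
      p.1 ≠ p.2.1 ∧ p.1 ≠ p.2.2.1 ∧ p.1 ≠ p.2.2.2 ∧ p.2.1 ≠ p.2.2.1 ∧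
      p.2.1 ≠ p.2.2.2 ∧ p.2.2.1 ≠ p.2.2.2 ∧
      G.Adj p.1 p.2.1 ∧ G.Adj p.2.1 p.2.2.1 ∧ G.Adj p.2.2.1 p.2.2.2 ∧
      G.Adj p.2.2.2 p.1)).card / 8


namespace QuadAux

/-- Breadth-first-search data: a root `r`, a parent map `p` and a level map `l`. -/
structure BFS {V : Type*} (G : SimpleGraph V) (r : V) (p : V → V) (l : V → ℕ) : Prop where
  root : p r = r
  adj : ∀ v, v ≠ r → G.Adj v (p v)
  lev : ∀ v, v ≠ r → l v = l (p v) + 1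
  lip : ∀ u v, G.Adj u v → l u ≤ l v + 1

/-- Non-tree adjacency. -/
def NT {V : Type*} (G : SimpleGraph V) (p : V → V) (u v : V) : Prop :=
  G.Adj u v ∧ p u ≠ v ∧ p v ≠ u

/-- The assignment of ordered 4-cycles `(a,b,c,d)` to pairs of non-tree darts
`(s,t), (u,v)`; the tags `1`, `2` give additional single-dart slots. -/
inductive R {V : Type*} (G : SimpleGraph V) (p : V → V) :
    V → V → V → V → V → V → V → V → ℕ → Prop
  | O {a b c d} : NT G p a b → NT G p c d → G.Adj b c → G.Adj d a →
      ¬ ((p a = c ∨ p c = a) ∧ (p b = d ∨ p d = b)) → R G p a b c d a b c d 0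
  | O2 {a b c d} : NT G p b c → NT G p d a → (p a = b ∨ p b = a) → (p c = d ∨ p d = c) →
      R G p a b c d b c a d 0
  | Ta {a b c d} : NT G p b c → NT G p c d → NT G p d a → p a = b → R G p a b c d a d d c 0
  | Tb {a b c d} : NT G p b c → NT G p c d → NT G p d a → p b = a → R G p a b c d b c d c 0
  | Tc {a b c d} : NT G p a b → NT G p b c → NT G p d a → p c = d → R G p a b c d b c b a 0
  | Td {a b c d} : NT G p a b → NT G p b c → NT G p d a → p d = c → R G p a b c d a d b a 0
  | Ad {a b c d} : NT G p a b → NT G p b c → (p c = d ∨ p d = c) → (p a = d ∨ p d = a) →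
      R G p a b c d a b b c 0
  | Ac {a b c d} : NT G p d a → NT G p a b → (p b = c ∨ p c = b) → (p d = c ∨ p c = d) →
      R G p a b c d d a b a 0
  | Ab {a b c d} : NT G p c d → NT G p d a → (p a = b ∨ p b = a) → (p c = b ∨ p b = c) →
      R G p a b c d d c d a 0
  | Aa {a b c d} : NT G p b c → NT G p c d → (p d = a ∨ p a = d) → (p b = a ∨ p a = b) →
      R G p a b c d c b d c 0
  | Sb {a b c d} : NT G p a b → NT G p b c → NT G p c d → NT G p d a →
      (p a = c ∨ p c = a) → p b = d → R G p a b c d a b b c 0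
  | Sd {a b c d} : NT G p a b → NT G p b c → NT G p c d → NT G p d a →
      (p a = c ∨ p c = a) → p d = b → R G p a b c d a d c d 0
  | U1 {a b c d} : NT G p a b → p b = c → p a = d → R G p a b c d a b a b 0
  | U2 {a b c d} : NT G p b c → p c = d → p b = a → R G p a b c d b c c b 0
  | U3 {a b c d} : NT G p c d → p d = a → p c = b → R G p a b c d c d c d 1
  | U4 {a b c d} : NT G p d a → p a = b → p d = c → R G p a b c d d a d a 2

/-- Ordered 4-cycles. -/
def Cyc {V : Type*} (G : SimpleGraph V) (a b c d : V) : Prop :=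
  a ≠ b ∧ a ≠ c ∧ a ≠ d ∧ b ≠ c ∧ b ≠ d ∧ c ≠ d ∧
    G.Adj a b ∧ G.Adj b c ∧ G.Adj c d ∧ G.Adj d a

theorem R_nt {V : Type*} {G : SimpleGraph V} {p : V → V} {a b c d s t u v : V} {k : ℕ}
    (h : R G p a b c d s t u v k) :
    NT G p s t ∧ NT G p u v ∧ (k = 0 ∨ ((k = 1 ∨ k = 2) ∧ u = s ∧ v = t)) := by
  have hs : ∀ x y, NT G p x y → NT G p y x := fun x y h => ⟨h.1.symm, h.2.2, h.2.1⟩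
  cases h <;> grind

set_option maxHeartbeats 4000000 in
theorem R_ex {V : Type*} {G : SimpleGraph V} {r : V} {p : V → V} {l : V → ℕ}
    (hB : BFS G r p l) {a b c d : V} (h : Cyc G a b c d) :
    ∃ s t u v k, R G p a b c d s t u v k := by
  obtain ⟨h1, h2, h3, h4, h5, h6, e1, e2, e3, e4⟩ := h
  have lv : ∀ x y, p x = y → x ≠ y → l x = l y + 1 := by
    intro x y hxy hne
    have : x ≠ r := by rintro rfl; exact hne (hB.root.symm.trans hxy)
    rw [← hxy]; exact hB.lev x this
  have k1 := hB.lip _ _ e1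
  have k2 := hB.lip _ _ e2
  have k3 := hB.lip _ _ e3
  have k4 := hB.lip _ _ e4
  have k1' := hB.lip _ _ e1.symm
  have k2' := hB.lip _ _ e2.symm
  have k3' := hB.lip _ _ e3.symm
  have k4' := hB.lip _ _ e4.symm
  have dic : ∀ x y, G.Adj x y → NT G p x y ∨ (p x = y ∨ p y = x) := by
    intro x y hxy; unfold NT; tauto
  have lab := lv a b
  have lba := lv b a
  have lbc := lv b c
  have lcb := lv c b
  have lcd := lv c d
  have ldc := lv d c
  have lda := lv d a
  have lad := lv a d
  have lac := lv a c
  have lca := lv c a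
  have lbd := lv b d
  have ldb := lv d b
  clear lv
  rcases dic _ _ e1 with n1 | n1 <;> rcases dic _ _ e2 with n2 | n2 <;>
    rcases dic _ _ e3 with n3 | n3 <;> rcases dic _ _ e4 with n4 | n4
  · -- NNNN
    by_cases hS : ((p a = c ∨ p c = a) ∧ (p b = d ∨ p d = b))
    · obtain ⟨x, y | y⟩ := hS
      · exact ⟨_, _, _, _, _, R.Sb n1 n2 n3 n4 x y⟩
      · exact ⟨_, _, _, _, _, R.Sd n1 n2 n3 n4 x y⟩
    · exact ⟨_, _, _, _, _, R.O n1 n3 e2 e4 hS⟩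
  · -- NNNT
    refine ⟨_, _, _, _, _, R.O n1 n3 e2 e4 ?_⟩
    grind
  · -- NNTN
    rcases n3 with n3 | n3
    · exact ⟨_, _, _, _, _, R.Tc n1 n2 n4 n3⟩
    · exact ⟨_, _, _, _, _, R.Td n1 n2 n4 n3⟩
  · -- NNTT
    exact ⟨_, _, _, _, _, R.Ad n1 n2 n3 (Or.symm (by assumption))⟩
  · -- NTNN
    refine ⟨_, _, _, _, _, R.O n1 n3 e2 e4 ?_⟩
    grind
  · -- NTNT
    refine ⟨_, _, _, _, _, R.O n1 n3 e2 e4 ?_⟩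
    grind
  · -- NTTN
    exact ⟨_, _, _, _, _, R.Ac n4 n1 n2 (Or.symm (by assumption))⟩
  · exact ⟨_, _, _, _, _, R.U1 n1 (by grind) (by grind)⟩
  · -- TNNN
    rcases n1 with n1 | n1
    · exact ⟨_, _, _, _, _, R.Ta n2 n3 n4 n1⟩
    · exact ⟨_, _, _, _, _, R.Tb n2 n3 n4 n1⟩
  · -- TNNT
    exact ⟨_, _, _, _, _, R.Aa n2 n3 n4 (Or.symm (by assumption))⟩
  · exact ⟨_, _, _, _, _, R.O2 n2 n4 n1 n3⟩
  · exact ⟨_, _, _, _, _, R.U2 n2 (by grind) (by grind)⟩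
  · exact ⟨_, _, _, _, _, R.Ab n3 n4 n1 (Or.symm (by assumption))⟩
  · exact ⟨_, _, _, _, _, R.U3 n3 (by grind) (by grind)⟩
  · exact ⟨_, _, _, _, _, R.U4 n4 (by grind) (by grind)⟩
  · exfalso; grind

set_option maxHeartbeats 40000000 in
theorem R_inj {V : Type*} {G : SimpleGraph V} {r : V} {p : V → V} {l : V → ℕ}
    (hB : BFS G r p l) {a b c d a' b' c' d' s t u v : V} {k : ℕ}
    (h : Cyc G a b c d) (h' : Cyc G a' b' c' d')
    (hR : R G p a b c d s t u v k) (hR' : R G p a' b' c' d' s t u v k) :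
    a = a' ∧ b = b' ∧ c = c' ∧ d = d' := by
  have lv : ∀ x y, p x = y → x ≠ y → l x = l y + 1 := by
    intro x y hxy hne
    have : x ≠ r := by rintro rfl; exact hne (hB.root.symm.trans hxy)
    rw [← hxy]; exact hB.lev x this
  have lip := hB.lip
  have sy : ∀ x y, G.Adj x y → G.Adj y x := fun x y h => h.symm
  unfold Cyc at h h'
  cases hR <;> cases hR' <;> simp only [NT] at * <;> grind

theorem exists_bfs {V : Type*} (G : SimpleGraph V) (hG : G.Connected) :
    ∃ r p l, BFS G r p l := by
  classical
  obtain ⟨r⟩ := hG.nonempty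
  have hex : ∀ v, ∃ w, (v = r → w = r) ∧
      (v ≠ r → G.Adj v w ∧ G.dist r v = G.dist r w + 1) := by
    intro v
    by_cases hv : v = r
    · exact ⟨r, fun _ => rfl, fun h => absurd hv h⟩
    · obtain ⟨w, hw⟩ := hG.exists_walk_length_eq_dist v r
      cases w with
      | nil => exact absurd rfl hv
      | @cons _ x _ hx q =>
        refine ⟨x, fun h => absurd h hv, fun _ => ⟨hx, ?_⟩⟩
        rw [SimpleGraph.Walk.length_cons] at hw
        have h1 : G.dist x r ≤ q.length := SimpleGraph.dist_le q
        have h2 : G.dist v r ≤ G.dist v x + G.dist x r := hG.dist_triangle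
        have h3 : G.dist v x = 1 := SimpleGraph.dist_eq_one_iff_adj.2 hx
        rw [SimpleGraph.dist_comm (u := r) (v := v), SimpleGraph.dist_comm (u := r) (v := x)]
        omega
  choose p hp using hex
  refine ⟨r, p, fun v => G.dist r v, (hp r).1 rfl, fun v hv => ((hp v).2 hv).1,
    fun v hv => ((hp v).2 hv).2, ?_⟩
  intro u v huv
  have h2 : G.dist r u ≤ G.dist r v + G.dist v u := hG.dist_triangle
  have h3 : G.dist v u = 1 := SimpleGraph.dist_eq_one_iff_adj.2 huv.symm
  omega

open Classical in
theorem card_NT {V : Type*} [Fintype V] (G : SimpleGraph V) {r : V} {p : V → V} {l : V → ℕ}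
    (hB : BFS G r p l) :
    (univ.filter (fun x : V × V => NT G p x.1 x.2)).card + 2 * (Fintype.card V - 1)
      ≤ 2 * G.edgeFinset.card := by
  have hD : (univ.filter (fun x : V × V => G.Adj x.1 x.2)).card = 2 * G.edgeFinset.card := by
    rw [← G.sum_degrees_eq_twice_card_edges, ← Finset.univ_product_univ,
      Finset.card_filter, Finset.sum_product]
    refine Finset.sum_congr rfl fun v _ => ?_
    rw [← Finset.card_filter, ← SimpleGraph.card_neighborFinset_eq_degree,
      SimpleGraph.neighborFinset_eq_filter]
  have hE : (univ.erase r : Finset V).card = Fintype.card V - 1 := by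
    rw [Finset.card_erase_of_mem (Finset.mem_univ _), Finset.card_univ]
  set A := univ.filter (fun x : V × V => NT G p x.1 x.2)
  set B1 := (univ.erase r : Finset V).image (fun v => (v, p v))
  set B2 := (univ.erase r : Finset V).image (fun v => (p v, v))
  have c1 : B1.card = Fintype.card V - 1 := by
    rw [← hE]; exact Finset.card_image_of_injective _ fun x y h => (Prod.ext_iff.1 h).1
  have c2 : B2.card = Fintype.card V - 1 := by
    rw [← hE]; exact Finset.card_image_of_injective _ fun x y h => (Prod.ext_iff.1 h).2
  have d12 : Disjoint B1 B2 := by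
    rw [Finset.disjoint_left]
    rintro ⟨x, y⟩ h1 h2
    simp only [B1, B2, Finset.mem_image, Finset.mem_erase, Finset.mem_univ, and_true,
      Prod.mk.injEq] at h1 h2
    obtain ⟨v, hv, rfl, rfl⟩ := h1
    obtain ⟨w, hw, h3, h4⟩ := h2
    have := hB.lev v hv
    have := hB.lev w hw
    rw [h3, h4] at this
    omega
  have dA : Disjoint A (B1 ∪ B2) := by
    rw [Finset.disjoint_left]
    rintro ⟨x, y⟩ h1 h2
    simp only [A, B1, B2, Finset.mem_image, Finset.mem_erase, Finset.mem_univ, and_true,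
      Prod.mk.injEq, Finset.mem_union, NT] at h1 h2
    grind
  have hsub : A ∪ (B1 ∪ B2) ⊆ univ.filter (fun x : V × V => G.Adj x.1 x.2) := by
    rintro ⟨x, y⟩ h
    simp only [A, B1, B2, Finset.mem_image, Finset.mem_erase, Finset.mem_univ, and_true,
      Prod.mk.injEq, Finset.mem_union, Finset.mem_filter, true_and] at h ⊢
    rcases h with h | ⟨v, hv, rfl, rfl⟩ | ⟨v, hv, rfl, rfl⟩
    · exact h.1
    · exact hB.adj v hv
    · exact (hB.adj v hv).symm
  have := Finset.card_le_card hsub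
  rw [Finset.card_union_of_disjoint dA, Finset.card_union_of_disjoint d12, hD, c1, c2] at this
  omega

open Classical in
theorem card_Cyc {V : Type*} [Fintype V] (G : SimpleGraph V) {r : V} {p : V → V} {l : V → ℕ}
    (hB : BFS G r p l) :
    (univ.filter (fun x : V × V × V × V => Cyc G x.1 x.2.1 x.2.2.1 x.2.2.2)).card
      ≤ (univ.filter (fun x : V × V => NT G p x.1 x.2)).card ^ 2
        + 2 * (univ.filter (fun x : V × V => NT G p x.1 x.2)).card := by
  set A := univ.filter (fun x : V × V => NT G p x.1 x.2) with hA
  have hmem : ∀ x y, (x, y) ∈ A ↔ NT G p x y := by intro x y; simp [hA]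
  let S : Finset ((V × V) × (V × V) × ℕ) :=
    (A ×ˢ A).image (fun x => (x.1, x.2, 0)) ∪
      (A ×ˢ ({1, 2} : Finset ℕ)).image (fun x => (x.1, x.1, x.2))
  have hS : S.card ≤ A.card ^ 2 + 2 * A.card := by
    refine (Finset.card_union_le _ _).trans ?_
    refine (Nat.add_le_add Finset.card_image_le Finset.card_image_le).trans ?_
    rw [Finset.card_product, Finset.card_product]
    have : ({1, 2} : Finset ℕ).card = 2 := rfl
    rw [this]
    apply le_of_eq; ring
  refine le_trans ?_ hS
  refine Finset.card_le_card_of_forall_subsingleton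
    (fun x y => R G p x.1 x.2.1 x.2.2.1 x.2.2.2 y.1.1 y.1.2 y.2.1.1 y.2.1.2 y.2.2) ?_ ?_
  · rintro ⟨a, b, c, d⟩ h
    have h : Cyc G a b c d := by simpa using h
    obtain ⟨s, t, u, v, k, hR⟩ := R_ex hB h
    refine ⟨((s, t), (u, v), k), ?_, hR⟩
    obtain ⟨h1, h2, h3⟩ := R_nt hR
    rw [← hmem] at h1 h2
    rcases h3 with rfl | ⟨h3, rfl, rfl⟩
    · refine Finset.mem_union_left _ (Finset.mem_image.2
        ⟨((s, t), (u, v)), Finset.mem_product.2 ⟨h1, h2⟩, rfl⟩)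
    · refine Finset.mem_union_right _ (Finset.mem_image.2
        ⟨((u, v), k), Finset.mem_product.2 ⟨h1, ?_⟩, rfl⟩)
      simpa using h3
  · rintro ⟨⟨s, t⟩, ⟨u, v⟩, k⟩ _ ⟨a, b, c, d⟩ ⟨h, hR⟩ ⟨a', b', c', d'⟩ ⟨h', hR'⟩
    have h : Cyc G a b c d := by simpa using h
    have h' : Cyc G a' b' c' d' := by simpa using h'
    obtain ⟨rfl, rfl, rfl, rfl⟩ := R_inj hB h h' hR hR'
    rfl

end QuadAux

/-- A connected graph with `n ≥ 5` vertices and `m` edges, `n ≤ m < 2(n-2)`,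
has at most `C(m-n+2, 2)` quadrangles. -/
theorem quadCount_le_of_connected
    {n m : ℕ} (hn : 5 ≤ n) (G : SimpleGraph (Fin n)) [DecidableRel G.Adj]
    (hconn : G.Connected) (hm : G.edgeFinset.card = m)
    (hnm : n ≤ m) (hm2 : m < 2 * (n - 2)) :
    quadCount G ≤ Nat.choose (m - n + 2) 2 := by
  classical
  obtain ⟨r, p, l, hB⟩ := QuadAux.exists_bfs G hconn
  have h1 := QuadAux.card_NT G hB
  have h2 := QuadAux.card_Cyc G hB
  have hq : quadCount G = (univ.filter (fun x : Fin n × Fin n × Fin n × Fin n =>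
      QuadAux.Cyc G x.1 x.2.1 x.2.2.1 x.2.2.2)).card / 8 := by
    unfold quadCount
    congr 2
    ext x
    refine Iff.trans (@Finset.mem_filter _ _ (_) _ _) ?_
    refine Iff.trans ?_ (@Finset.mem_filter _ _ (_) _ _).symm
    exact Iff.rfl
  rw [hq]
  have hm' : 2 * m = 2 * G.edgeFinset.card := by rw [hm]
  generalize (univ.filter (fun x : Fin n × Fin n × Fin n × Fin n =>
      QuadAux.Cyc G x.1 x.2.1 x.2.2.1 x.2.2.2)).card = Q at h2 ⊢
  generalize (univ.filter (fun x : Fin n × Fin n => QuadAux.NT G p x.1 x.2)).card = A at h1 h2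
  have h3 : A + 2 * (n - 1) ≤ 2 * m := by
    rw [Fintype.card_fin] at h1
    rw [hm']
    convert h1
  obtain ⟨k, hk⟩ : ∃ k, m = n - 1 + k := ⟨m - (n - 1), by omega⟩
  have hA : A ≤ 2 * k := by omega
  have e : m - n + 2 = k + 1 := by omega
  rw [e, Nat.choose_two_right, Nat.le_div_iff_mul_le (by norm_num), Nat.add_sub_cancel]
  have h4 : Q ≤ 4 * ((k + 1) * k) := by nlinarith
  omega
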